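/- (Shirshov's theorem analogue) Every Tortkara algebra over a field of characteristic 0 generated by two elements is special, i.e., isomorphic to a subalgebra of A^(−) for some Zinbiel algebra A. -/

import Mathlib

/-- A bundled Zinbiel algebra over `K`: a nonunital nonassociative `K`-algebra whose
product satisfies the Zinbiel identity `a∘(b∘c) = (a∘b + b∘a)∘c`. -/
structure ZinbielAlgebra (K : Type) [Field K] : Type 1 where
  carrier : Type
  [ring : NonUnitalNonAssocRing carrier]
  [mod : Module K carrier]
  [smulComm : SMulCommClass K carrier carrier]
  [tower : IsScalarTower K carrier carrier]
  zinbiel : ∀ a b c : carrier, a * (b * c) = (a * b + b * a) * c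

attribute [instance] ZinbielAlgebra.ring ZinbielAlgebra.mod
  ZinbielAlgebra.smulComm ZinbielAlgebra.tower

/-- A bundled Tortkara algebra over `K`: an anticommutative nonunital nonassociative
`K`-algebra satisfying `(ab)(cb) = J(a,b,c)b`, where `J(a,b,c) = (ab)c+(bc)a+(ca)b`. -/
structure TortkaraAlgebra (K : Type) [Field K] : Type 1 where
  carrier : Type
  [ring : NonUnitalNonAssocRing carrier]
  [mod : Module K carrier]
  [smulComm : SMulCommClass K carrier carrier]
  [tower : IsScalarTower K carrier carrier]
  anticomm : ∀ a b : carrier, a * b = -(b * a)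
  tortkara : ∀ a b c : carrier,
    (a * b) * (c * b) = ((a * b) * c + (b * c) * a + (c * a) * b) * b

attribute [instance] TortkaraAlgebra.ring TortkaraAlgebra.mod
  TortkaraAlgebra.smulComm TortkaraAlgebra.tower

/-!
Over a commutative `ℚ`-algebra, every product of elements of a Tortkara algebra generated by `g₀`
and `g₁` is a combination of the left-normed words `((g₀g₁)gᵢ)gⱼ⋯`. Let `F` be the free Zinbiel
algebra on two letters, realised inside the noncommutative power series with the half-shuffle
product, and let `S` be the subalgebra of `F⁽⁻⁾` generated by the letters. Evaluated at the letters,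
the left-normed words are the series `w(ab - ba)` for a family of linearly independent `w`. Hence
`S` maps onto the given algebra `T` and it remains to extend the kernel `I` to an ideal of `F` that
meets `S` only in `I`. The combinations of shuffle products of letters with elements of `I` form an
ideal of the Zinbiel algebra that `S` generates, and every one of them differs from an element of
`I` by a series without linear part in the shuffle ideal generated by the letters. The letters act
on these series by derivations, and an Euler operator argument shows that no `w(ab - ba) ≠ 0` lies
in that ideal.
-/

universe u v

section Derivation

theorem isUnit_natCast_of_ratAlgebra (K : Type*) [Semiring K] [Algebra ℚ K] {n : ℕ} (hn : n ≠ 0) :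
    IsUnit (n : K) := by
  simpa using (IsUnit.mk0 (n : ℚ) (by exact_mod_cast hn)).map (algebraMap ℚ K)

variable {K A : Type*} [CommRing K] [CommRing A] [Algebra K A]

theorem derivation_sub_self_mem_sq_span {s : Set A} (D : Derivation K A A)
    (hD : ∀ f, D f ∈ Ideal.span s) (hs : ∀ x ∈ s, D x = x) {f : A} (hf : f ∈ Ideal.span s) :
    D f - f ∈ Ideal.span s ^ 2 := by
  induction hf using Submodule.span_induction with
  | mem x hx => simp [hs x hx]
  | zero => simp
  | add f g _ _ hf hg => simpa [add_sub_add_comm] using add_mem hf hg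
  | smul r f hf ih =>
    have hsplit : D (r • f) - r • f = r * (D f - f) + f * D r := by
      simp only [smul_eq_mul, D.leibniz]; ring
    rw [hsplit]
    exact add_mem (Ideal.mul_mem_left _ r ih) (sq (Ideal.span s) ▸ Ideal.mul_mem_mul hf (hD r))

theorem derivation_sub_nsmul_mem_pow_succ {I : Ideal A} {D : Derivation K A A}
    (hD : ∀ f, D f ∈ I) (hI : ∀ f ∈ I, D f - f ∈ I ^ 2) {n : ℕ} {f : A} (hf : f ∈ I ^ n) :
    D f - n • f ∈ I ^ (n + 1) := by
  induction n generalizing f with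
  | zero => simpa using hD f
  | succ n ih =>
    rw [pow_succ] at hf
    induction hf using Submodule.mul_induction_on' with
    | mem_mul_mem g hg h hh =>
      have hsplit : D (g * h) - (n + 1) • (g * h) = g * (D h - h) + (D g - n • g) * h := by
        simp only [D.leibniz, smul_eq_mul, nsmul_eq_mul]; push_cast; ring
      rw [hsplit]
      refine add_mem ?_ (pow_succ I (n + 1) ▸ Ideal.mul_mem_mul (ih hg) hh)
      simpa only [← pow_add] using Ideal.mul_mem_mul hg (hI h hh)
    | add g _ h _ hg hh => simpa [add_sub_add_comm] using add_mem hg hh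

theorem mem_pow_of_derivation_eq_smul {I : Ideal A} {D : Derivation K A A}
    (hD : ∀ f, D f ∈ I) (hI : ∀ f ∈ I, D f - f ∈ I ^ 2) {n₀ : ℕ} {μ : K} {f : A}
    (hf : f ∈ I ^ n₀) (hDf : D f = μ • f) (hμ : ∀ n ≥ n₀, IsUnit (μ - n)) (n : ℕ) (hn : n₀ ≤ n) :
    f ∈ I ^ n := by
  induction n, hn using Nat.le_induction with
  | base => exact hf
  | succ n hn ih =>
    refine (Submodule.smul_mem_iff_of_isUnit ((I ^ (n + 1)).restrictScalars K) (hμ n hn)).1 ?_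
    rw [sub_smul, ← hDf, Nat.cast_smul_eq_nsmul]
    exact derivation_sub_nsmul_mem_pow_succ hD hI ih

end Derivation

/-! ### Tortkara algebras -/

/-- The Jacobian `J(a, b, c)`. -/
def jacobian {L : Type*} [NonUnitalNonAssocRing L] (a b c : L) : L :=
  a * b * c + b * c * a + c * a * b

/-- The identities defining a Tortkara algebra: anticommutativity and
`(ab)(cb) = J(a, b, c)b`. -/
class IsTortkara (L : Type*) [NonUnitalNonAssocRing L] : Prop where
  mul_anticomm (a b : L) : a * b = -(b * a)
  mul_mul_mul_eq (a b c : L) : (a * b) * (c * b) = jacobian a b c * b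

/-- The left-normed word `((g₀ g₁) g_{iₙ}) ⋯ g_{i₁}` attached to the list `[i₁, …, iₙ]`. -/
def leftNormedWord {L : Type*} [Mul L] (g : Fin 2 → L) (l : List (Fin 2)) : L :=
  l.foldr (fun i u => u * g i) (g 0 * g 1)

/-- The span of the left-normed words of degree at least two. -/
def leftNormedSpan (K : Type*) {L : Type*} [CommRing K] [NonUnitalNonAssocRing L] [Module K L]
    (g : Fin 2 → L) : Submodule K L :=
  Submodule.span K (Set.range (leftNormedWord g))

section LeftNormed

variable {K L : Type*} [CommRing K] [NonUnitalNonAssocRing L] [Module K L] {g : Fin 2 → L}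

theorem leftNormedWord_mem (l : List (Fin 2)) : leftNormedWord g l ∈ leftNormedSpan K g :=
  Submodule.subset_span ⟨l, rfl⟩

variable [IsScalarTower K L L]

theorem mul_mem_of_forall_leftNormedWord_mul_mem {M : Submodule K L} {u v : L}
    (hu : u ∈ leftNormedSpan K g)
    (h : ∀ l, leftNormedWord g l * v ∈ M) : u * v ∈ M :=
  (Submodule.span_le (p := M.comap (LinearMap.mulRight K v))).2 (by rintro _ ⟨l, rfl⟩; exact h l) hu

theorem mul_letter_mem_leftNormedSpan {u : L} (hu : u ∈ leftNormedSpan K g) (i : Fin 2) :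
    u * g i ∈ leftNormedSpan K g :=
  mul_mem_of_forall_leftNormedWord_mul_mem hu fun l => leftNormedWord_mem (i :: l)

end LeftNormed

namespace IsTortkara

section Ring

variable {L : Type*} [NonUnitalNonAssocRing L] [IsTortkara L]

instance prod {L' : Type*} [NonUnitalNonAssocRing L'] [IsTortkara L'] : IsTortkara (L × L') where
  mul_anticomm _ _ := Prod.ext (mul_anticomm _ _) (mul_anticomm _ _)
  mul_mul_mul_eq _ _ _ := Prod.ext (mul_mul_mul_eq _ _ _) (mul_mul_mul_eq _ _ _)

theorem mul_self [IsAddTorsionFree L] (a : L) : a * a = 0 :=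
  self_eq_neg.1 (mul_anticomm a a)

theorem mul_mul_mul_add_mul_mul_mul (v w y z : L) :
    (v * y) * (z * w) + (v * w) * (z * y) = jacobian v y z * w + jacobian v w z * y := by
  have h := mul_mul_mul_eq v (y + w) z
  have hy := mul_mul_mul_eq v y z
  have hw := mul_mul_mul_eq v w z
  simp only [jacobian, mul_add, add_mul] at h hy hw ⊢
  rw [hy, hw] at h
  rw [← sub_eq_zero] at h ⊢
  rw [← h]
  abel

theorem mul_mem_comm {K : Type*} [CommRing K] [Module K L] {M : Submodule K L}
    {a b : L} : a * b ∈ M ↔ b * a ∈ M := by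
  rw [mul_anticomm a b, neg_mem_iff]

end Ring

section Module

variable {K L : Type*} [CommRing K] [NonUnitalNonAssocRing L] [Module K L] [IsTortkara L]
  {g : Fin 2 → L}

theorem letter_mul_letter_mem_leftNormedSpan [IsAddTorsionFree L] (i j : Fin 2) :
    g i * g j ∈ leftNormedSpan K g := by
  have h01 : g 0 * g 1 ∈ leftNormedSpan K g := leftNormedWord_mem []
  fin_cases i <;> fin_cases j
  · simp [mul_self]
  · exact h01
  · exact mul_mem_comm.1 h01
  · simp [mul_self]

variable [IsScalarTower K L L]

theorem jacobian_mem_leftNormedSpan {v : L} (hv : v ∈ leftNormedSpan K g) {i j : Fin 2}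
    (h : v * (g i * g j) ∈ leftNormedSpan K g) :
    jacobian v (g i) (g j) ∈ leftNormedSpan K g := by
  refine add_mem (add_mem ?_ (mul_mem_comm.1 h)) ?_
  · exact mul_letter_mem_leftNormedSpan (mul_letter_mem_leftNormedSpan hv i) j
  · rw [mul_anticomm (g j), neg_mul, neg_mem_iff]
    exact mul_letter_mem_leftNormedSpan (mul_letter_mem_leftNormedSpan hv j) i

variable [IsAddTorsionFree L]

theorem leftNormedWord_mul_letter_mul_letter_mem (l : List (Fin 2)) (i j : Fin 2) :
    leftNormedWord g l * (g i * g j) ∈ leftNormedSpan K g := by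
  induction l generalizing i j with
  | nil =>
    have h : (g 0 * g 1) * (g i * g j) = 0 := by
      fin_cases i <;> fin_cases j <;> simp [mul_self, mul_anticomm (g 1) (g 0)]
    simp [leftNormedWord, h]
  | cons k l ih =>
    have hmul (i j : Fin 2) : (leftNormedWord g l * g j) * (g i * g j) ∈ leftNormedSpan K g := by
      rw [mul_mul_mul_eq]
      exact mul_letter_mem_leftNormedSpan
        (jacobian_mem_leftNormedSpan (leftNormedWord_mem l) (ih j i)) j
    obtain rfl | rfl | rfl : i = j ∨ k = j ∨ k = i := by omega
    · simp [mul_self]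
    · exact hmul i k
    · rw [mul_anticomm (g k), mul_neg, neg_mem_iff]
      exact hmul j k

theorem mul_letter_mul_letter_mem {u : L} (hu : u ∈ leftNormedSpan K g) (i j : Fin 2) :
    u * (g i * g j) ∈ leftNormedSpan K g :=
  mul_mem_of_forall_leftNormedWord_mul_mem hu
    fun l => leftNormedWord_mul_letter_mul_letter_mem l i j

theorem mul_leftNormedWord_mem (l : List (Fin 2)) {u : L} (hu : u ∈ leftNormedSpan K g) :
    u * leftNormedWord g l ∈ leftNormedSpan K g := by
  induction l generalizing u with
  | nil => exact mul_letter_mul_letter_mem hu 0 1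
  | cons j l ih =>
    refine mul_mem_of_forall_leftNormedWord_mul_mem hu fun l' => ?_
    set w := leftNormedWord g l
    induction l' with
    | nil =>
      exact mul_mem_comm.1 (mul_letter_mul_letter_mem (leftNormedWord_mem (j :: l)) 0 1)
    | cons i l' ih' =>
      set v := leftNormedWord g l'
      have hv : v ∈ leftNormedSpan K g := leftNormedWord_mem l'
      have hexpand : (v * g i) * (w * g j) =
          (v * w) * (g j * g i) - jacobian v (g i) (g j) * w - jacobian v w (g j) * g i := by
        rw [mul_anticomm w, mul_neg, sub_sub, ← mul_mul_mul_add_mul_mul_mul v w]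
        abel
      have hJ : jacobian v w (g j) ∈ leftNormedSpan K g := by
        refine add_mem (add_mem ?_ (mul_mem_comm.1 ih')) (ih ?_)
        · exact mul_letter_mem_leftNormedSpan (ih hv) j
        · exact mul_mem_comm.1 (mul_letter_mem_leftNormedSpan hv j)
      change (v * g i) * (w * g j) ∈ leftNormedSpan K g
      rw [hexpand]
      refine sub_mem (sub_mem ?_ (ih ?_)) (mul_letter_mem_leftNormedSpan hJ i)
      · exact mul_letter_mul_letter_mem (ih hv) j i
      · exact jacobian_mem_leftNormedSpan hv (mul_letter_mul_letter_mem hv i j)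

variable [SMulCommClass K L L]

theorem mul_mem_leftNormedSpan_of_mem_span_sup {x y : L}
    (hx : x ∈ Submodule.span K (Set.range g) ⊔ leftNormedSpan K g)
    (hy : y ∈ Submodule.span K (Set.range g) ⊔ leftNormedSpan K g) :
    x * y ∈ leftNormedSpan K g := by
  rw [leftNormedSpan, ← Submodule.span_union] at hx hy
  refine LinearMap.BilinMap.apply_apply_mem_of_mem_span _ _ _ (LinearMap.mul K L) ?_ x y hx hy
  rintro _ (⟨i, rfl⟩ | ⟨l, rfl⟩) _ (⟨j, rfl⟩ | ⟨l', rfl⟩)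
  · exact letter_mul_letter_mem_leftNormedSpan i j
  · exact mul_mem_comm.1 (mul_letter_mem_leftNormedSpan (leftNormedWord_mem l') i)
  · exact mul_letter_mem_leftNormedSpan (leftNormedWord_mem l) j
  · exact mul_leftNormedWord_mem l' (leftNormedWord_mem l)

theorem mem_span_sup_leftNormedSpan_of_mem_adjoin {p : L}
    (hp : p ∈ NonUnitalAlgebra.adjoin K (Set.range g)) :
    p ∈ Submodule.span K (Set.range g) ⊔ leftNormedSpan K g := by
  induction hp using NonUnitalAlgebra.adjoin_induction with
  | mem x hx => exact Submodule.mem_sup_left (Submodule.subset_span hx)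
  | zero => exact zero_mem _
  | add x y _ _ hx hy => exact add_mem hx hy
  | smul r x _ hx => exact Submodule.smul_mem _ r hx
  | mul x y _ _ hx hy =>
    exact Submodule.mem_sup_right (mul_mem_leftNormedSpan_of_mem_span_sup hx hy)

end Module

end IsTortkara

/-! ### Zinbiel algebras -/

/-- The identity `a(bc) = (ab + ba)c` defining a Zinbiel algebra. -/
class IsZinbiel (Z : Type*) [NonUnitalNonAssocRing Z] : Prop where
  mul_mul (a b c : Z) : a * (b * c) = (a * b + b * a) * c

theorem IsZinbiel.of_surjective {F Z Z' : Type*} [NonUnitalNonAssocRing Z] [IsZinbiel Z]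
    [NonUnitalNonAssocRing Z'] [FunLike F Z Z'] [NonUnitalRingHomClass F Z Z'] (f : F)
    (hf : Function.Surjective f) : IsZinbiel Z' where
  mul_mul := by
    intro a b c
    obtain ⟨a, rfl⟩ := hf a
    obtain ⟨b, rfl⟩ := hf b
    obtain ⟨c, rfl⟩ := hf c
    simp only [← map_mul, ← map_add, mul_mul]

/-- The minus-algebra `A⁽⁻⁾`: the module `A` with the commutator as its product. -/
def MinusAlgebra (A : Type*) : Type _ := A

namespace MinusAlgebra

variable {K A : Type*} [CommRing K] [NonUnitalNonAssocRing A] [Module K A]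

instance : AddCommGroup (MinusAlgebra A) := inferInstanceAs (AddCommGroup A)

instance : Module K (MinusAlgebra A) := inferInstanceAs (Module K A)

variable (K) in
/-- The identity map from `A` to `A⁽⁻⁾`. -/
def toMinus : A ≃ₗ[K] MinusAlgebra A := LinearEquiv.refl K A

instance : NonUnitalNonAssocRing (MinusAlgebra A) where
  mul (x y : A) := (⁅x, y⁆ : A)
  left_distrib (x y z : A) := by
    change ⁅x, y + z⁆ = ⁅x, y⁆ + ⁅x, z⁆
    simp only [Ring.lie_def, mul_add, add_mul]; abel
  right_distrib (x y z : A) := by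
    change ⁅x + y, z⁆ = ⁅x, z⁆ + ⁅y, z⁆
    simp only [Ring.lie_def, mul_add, add_mul]; abel
  zero_mul (x : A) := by
    change ⁅(0 : A), x⁆ = 0
    simp [Ring.lie_def]
  mul_zero (x : A) := by
    change ⁅x, (0 : A)⁆ = 0
    simp [Ring.lie_def]

theorem toMinus_mul_toMinus (x y : A) : toMinus K x * toMinus K y = toMinus K ⁅x, y⁆ := rfl

variable [SMulCommClass K A A] [IsScalarTower K A A]

instance : SMulCommClass K (MinusAlgebra A) (MinusAlgebra A) where
  smul_comm k (x y : A) := by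
    change k • ⁅x, y⁆ = ⁅x, k • y⁆
    simp only [Ring.lie_def, smul_sub, mul_smul_comm, smul_mul_assoc]

instance : IsScalarTower K (MinusAlgebra A) (MinusAlgebra A) where
  smul_assoc k (x y : A) := by
    change ⁅k • x, y⁆ = k • ⁅x, y⁆
    simp only [Ring.lie_def, smul_sub, mul_smul_comm, smul_mul_assoc]

end MinusAlgebra

namespace IsZinbiel

variable {Z : Type*} [NonUnitalNonAssocRing Z]

/-- The symmetrised product `xy + yx`, which is commutative and associative. -/
def symMul (x y : Z) : Z := x * y + y * x

theorem symMul_comm (x y : Z) : symMul x y = symMul y x := add_comm _ _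

@[simp] theorem symMul_zero (x : Z) : symMul x 0 = 0 := by simp [symMul]

@[simp] theorem zero_symMul (x : Z) : symMul 0 x = 0 := by simp [symMul]

theorem symMul_add (x y z : Z) : symMul x (y + z) = symMul x y + symMul x z := by
  simp only [symMul, mul_add, add_mul, add_add_add_comm]

theorem add_symMul (x y z : Z) : symMul (x + y) z = symMul x z + symMul y z := by
  simp only [symMul, mul_add, add_mul, add_add_add_comm]

theorem symMul_smul {K : Type*} [CommRing K] [Module K Z] [SMulCommClass K Z Z]
    [IsScalarTower K Z Z] (k : K) (x y : Z) : symMul x (k • y) = k • symMul x y := by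
  simp only [symMul, mul_smul_comm, smul_mul_assoc, smul_add]

theorem smul_symMul {K : Type*} [CommRing K] [Module K Z] [SMulCommClass K Z Z]
    [IsScalarTower K Z Z] (k : K) (x y : Z) : symMul (k • x) y = k • symMul x y := by
  rw [symMul_comm, symMul_smul, symMul_comm]

/-- The word `c₁(c₂(⋯(cₙ x)))` with letters in `Z`. -/
def leftWord (l : List Z) (x : Z) : Z := l.foldr (· * ·) x

/-- The word `c₁ ⋯ cₙ x` for the symmetrised product. -/
def symWord (l : List Z) (x : Z) : Z := l.foldr symMul x

theorem leftWord_add (l : List Z) (x y : Z) : leftWord l (x + y) = leftWord l x + leftWord l y := by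
  induction l with
  | nil => rfl
  | cons c l ih => simpa [leftWord, mul_add] using congrArg (c * ·) ih

variable [IsZinbiel Z]

instance isTortkara_minusAlgebra : IsTortkara (MinusAlgebra Z) where
  mul_anticomm (x y : Z) := (neg_sub (y * x) (x * y)).symm
  mul_mul_mul_eq (x y z : Z) := by
    change ⁅⁅x, y⁆, ⁅z, y⁆⁆ = ⁅⁅⁅x, y⁆, z⁆ + ⁅⁅y, z⁆, x⁆ + ⁅⁅z, x⁆, y⁆, y⁆
    simp only [Ring.lie_def, mul_sub, sub_mul, mul_add, add_mul, mul_mul]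
    abel

protected theorem mul_left_comm (x y z : Z) : x * (y * z) = y * (x * z) := by
  rw [mul_mul, mul_mul, add_comm]

theorem symMul_assoc (x y z : Z) : symMul (symMul x y) z = symMul x (symMul y z) := by
  simp only [symMul, mul_add, add_mul, mul_mul]
  abel

theorem symMul_left_comm (x y z : Z) : symMul x (symMul y z) = symMul y (symMul x z) := by
  rw [← symMul_assoc, symMul_comm x, symMul_assoc]

theorem mul_mul_eq_symMul_mul (x y z : Z) : x * (y * z) = symMul x y * z := mul_mul x y z

theorem symMul_lie (u v i : Z) : symMul ⁅u, v⁆ i =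
    symMul u ⁅i, v⁆ - symMul v ⁅i, u⁆ + (⁅⁅i, u⁆, v⁆ - ⁅i, ⁅u, v⁆⁆ - ⁅⁅i, v⁆, u⁆) := by
  simp only [symMul, Ring.lie_def, mul_sub, sub_mul, add_mul, mul_mul]
  abel

theorem mul_lie_eq (x u v : Z) : x * ⁅u, v⁆ = symMul x u * v - symMul x v * u := by
  rw [Ring.lie_def, mul_sub, mul_mul_eq_symMul_mul, mul_mul_eq_symMul_mul]

theorem leftWord_mul (l : List Z) (x y : Z) : leftWord l (x * y) = x * leftWord l y := by
  induction l with
  | nil => rfl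
  | cons c l ih => simpa [leftWord, IsZinbiel.mul_left_comm x] using congrArg (c * ·) ih

theorem symWord_mul (l : List Z) (x y : Z) : symWord l x * y = leftWord l (x * y) := by
  induction l with
  | nil => rfl
  | cons c l ih =>
    change symMul c (symWord l x) * y = c * leftWord l (x * y)
    rw [← mul_mul_eq_symMul_mul, ih]

theorem symWord_mul_letter (l : List Z) (x c : Z) :
    symWord l x * c = leftWord (c :: l) x + leftWord l ⁅x, c⁆ := by
  rw [symWord_mul, ← sub_add_cancel (x * c) (c * x), ← Ring.lie_def, leftWord_add, add_comm,
    leftWord_mul]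
  rfl

section Spans

variable {K Z : Type*} [CommRing K] [NonUnitalNonAssocRing Z] [Module K Z]

/-- The span of the words `c₁ ⋯ cₙ i` for the symmetrised product, with `cₖ ∈ X` and `i ∈ I`. -/
def symSpan (X : Set Z) (I : Submodule K Z) : Submodule K Z :=
  Submodule.span K {x | ∃ l : List Z, (∀ c ∈ l, c ∈ X) ∧ ∃ i ∈ I, symWord l i = x}

/-- The span of the words `c₁(⋯(cₘ i))` of length `m < n`, with `cₖ ∈ X` and `i ∈ I`. -/
def leftSpan (X : Set Z) (I : Submodule K Z) (n : ℕ) : Submodule K Z :=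
  Submodule.span K
    {x | ∃ l : List Z, l.length < n ∧ (∀ c ∈ l, c ∈ X) ∧ ∃ i ∈ I, leftWord l i = x}

variable {X : Set Z} {I : Submodule K Z}

theorem symWord_mem_symSpan {l : List Z} (hl : ∀ c ∈ l, c ∈ X) {i : Z} (hi : i ∈ I) :
    symWord l i ∈ symSpan X I :=
  Submodule.subset_span ⟨l, hl, i, hi, rfl⟩

theorem le_symSpan : I ≤ symSpan X I :=
  fun i hi => symWord_mem_symSpan (l := []) (by simp) hi

theorem leftWord_mem_leftSpan {l : List Z} (hl : ∀ c ∈ l, c ∈ X) {i : Z} (hi : i ∈ I) {n : ℕ}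
    (hn : l.length < n) : leftWord l i ∈ leftSpan X I n :=
  Submodule.subset_span ⟨l, hn, hl, i, hi, rfl⟩

variable [SMulCommClass K Z Z]

theorem mul_mem_leftSpan_succ {c : Z} (hc : c ∈ X) {n : ℕ} {x : Z} (hx : x ∈ leftSpan X I n) :
    c * x ∈ leftSpan X I (n + 1) := by
  refine (Submodule.span_le (p := (leftSpan X I (n + 1)).comap (LinearMap.mulLeft K c))).2 ?_ hx
  rintro _ ⟨l, hln, hl, i, hi, rfl⟩
  exact leftWord_mem_leftSpan (l := c :: l) (by simpa [hc] using hl) hi (by simpa using hln)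

theorem symMul_mem_symSpan [IsScalarTower K Z Z] {c : Z} (hc : c ∈ X) {x : Z}
    (hx : x ∈ symSpan X I) : symMul c x ∈ symSpan X I := by
  refine (Submodule.span_le (p := (symSpan X I).comap
    (LinearMap.mulLeft K c + LinearMap.mulRight K c))).2 ?_ hx
  rintro _ ⟨l, hl, i, hi, rfl⟩
  exact symWord_mem_symSpan (l := c :: l) (by simpa [hc] using hl) hi

variable [IsZinbiel Z]

/-- Moving a letter `c` across `i` costs a commutator `⁅i, c⁆ ∈ I`, which leaves a shorter word. -/
theorem symWord_sub_nsmul_leftWord_mem (hI : ∀ i ∈ I, ∀ c ∈ X, ⁅i, c⁆ ∈ I) {l : List Z}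
    (hl : ∀ c ∈ l, c ∈ X) {i : Z} (hi : i ∈ I) :
    symWord l i - (l.length + 1) • leftWord l i ∈ leftSpan X I l.length := by
  induction l with
  | nil => simp [symWord, leftWord]
  | cons c l ih =>
    obtain ⟨hc, hl⟩ := List.forall_mem_cons.1 hl
    have hsplit : symWord (c :: l) i - ((c :: l).length + 1) • leftWord (c :: l) i =
        c * (symWord l i - (l.length + 1) • leftWord l i) + leftWord l ⁅i, c⁆ := by
      change c * symWord l i + symWord l i * c - _ = _
      rw [symWord_mul_letter, mul_sub, mul_smul_comm, List.length_cons, add_smul _ 1, one_smul]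
      change _ - (_ • leftWord (c :: l) i + _) = _ - _ • leftWord (c :: l) i + _
      abel
    rw [hsplit]
    exact add_mem (mul_mem_leftSpan_succ hc (ih hl))
      (leftWord_mem_leftSpan hl (hI i hi c hc) (Nat.lt_succ_self _))

variable [Algebra ℚ K]

theorem leftWord_mem_symSpan (hI : ∀ i ∈ I, ∀ c ∈ X, ⁅i, c⁆ ∈ I) {l : List Z}
    (hl : ∀ c ∈ l, c ∈ X) {i : Z} (hi : i ∈ I) : leftWord l i ∈ symSpan X I := by
  induction h : l.length using Nat.strong_induction_on generalizing l i with
  | _ n ih =>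
    subst h
    have hshort : leftSpan X I l.length ≤ symSpan X I :=
      Submodule.span_le.2 fun _ ⟨l', hn, hl', i', hi', hx⟩ => hx ▸ ih _ hn hl' hi' rfl
    have hmem := sub_mem (symWord_mem_symSpan hl hi)
      (hshort (symWord_sub_nsmul_leftWord_mem hI hl hi))
    rw [sub_sub_cancel, ← Nat.cast_smul_eq_nsmul K] at hmem
    exact (Submodule.smul_mem_iff_of_isUnit _
      (isUnit_natCast_of_ratAlgebra K l.length.succ_ne_zero)).1 hmem

theorem mul_letter_mem_symSpan [IsScalarTower K Z Z] (hI : ∀ i ∈ I, ∀ c ∈ X, ⁅i, c⁆ ∈ I) {x : Z}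
    (hx : x ∈ symSpan X I) {c : Z} (hc : c ∈ X) : x * c ∈ symSpan X I := by
  refine (Submodule.span_le (p := (symSpan X I).comap (LinearMap.mulRight K c))).2 ?_ hx
  rintro _ ⟨l, hl, i, hi, rfl⟩
  change symWord l i * c ∈ symSpan X I
  rw [symWord_mul_letter]
  exact add_mem (leftWord_mem_symSpan hI (List.forall_mem_cons.2 ⟨hc, hl⟩) hi)
    (leftWord_mem_symSpan hI hl (hI i hi c hc))

end Spans

section Closure

open MinusAlgebra

variable {K Z : Type*} [CommRing K] [NonUnitalNonAssocRing Z] [Module K Z] [SMulCommClass K Z Z]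
  [IsScalarTower K Z Z]

variable (K) in
/-- The subalgebra of `Z⁽⁻⁾` generated by `X`, as a submodule of `Z`. -/
def commutatorClosure (X : Set Z) : Submodule K Z :=
  (NonUnitalAlgebra.adjoin K (toMinus K '' X)).toSubmodule.comap (toMinus K).toLinearMap

variable {X : Set Z}

theorem mem_commutatorClosure {x : Z} :
    x ∈ commutatorClosure K X ↔ toMinus K x ∈ NonUnitalAlgebra.adjoin K (toMinus K '' X) :=
  Iff.rfl

theorem subset_commutatorClosure : X ⊆ commutatorClosure K X := fun _ hc =>
  mem_commutatorClosure.2 (NonUnitalAlgebra.subset_adjoin K (Set.mem_image_of_mem _ hc))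

theorem lie_mem_commutatorClosure {u v : Z} (hu : u ∈ commutatorClosure K X)
    (hv : v ∈ commutatorClosure K X) : ⁅u, v⁆ ∈ commutatorClosure K X := by
  rw [mem_commutatorClosure] at hu hv ⊢
  rw [← toMinus_mul_toMinus]
  exact mul_mem hu hv

theorem commutatorClosure_induction {p : (x : Z) → x ∈ commutatorClosure K X → Prop}
    (mem : ∀ c hc, p c (subset_commutatorClosure hc)) (zero : p 0 (zero_mem _))
    (add : ∀ u v hu hv, p u hu → p v hv → p (u + v) (add_mem hu hv))
    (smul : ∀ (k : K) u hu, p u hu → p (k • u) (Submodule.smul_mem _ k hu))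
    (lie : ∀ u v hu hv, p u hu → p v hv → p ⁅u, v⁆ (lie_mem_commutatorClosure hu hv))
    {s : Z} (hs : s ∈ commutatorClosure K X) : p s hs := by
  suffices ∀ x (hx : x ∈ NonUnitalAlgebra.adjoin K (toMinus K '' X)), p ((toMinus K).symm x) hx from
    this _ hs
  intro x hx
  induction hx using NonUnitalAlgebra.adjoin_induction with
  | mem _ hx =>
    obtain ⟨c, hc, rfl⟩ := hx
    exact mem c hc
  | zero => exact zero
  | add x y hx hy hx' hy' => exact add _ _ hx hy hx' hy'
  | smul k x hx hx' => exact smul k _ hx hx'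
  | mul x y hx hy hx' hy' => exact lie _ _ hx hy hx' hy'

end Closure

section SymSpanIdeal

variable {K Z : Type*} [CommRing K] [NonUnitalNonAssocRing Z] [Module K Z] [SMulCommClass K Z Z]
  [IsScalarTower K Z Z] {X : Set Z} {I : Submodule K Z}

theorem symSpan_induction {p : (x : Z) → x ∈ symSpan X I → Prop}
    (mem : ∀ i hi, p i (le_symSpan hi)) (zero : p 0 (zero_mem _))
    (add : ∀ x y hx hy, p x hx → p y hy → p (x + y) (add_mem hx hy))
    (smul : ∀ (k : K) x hx, p x hx → p (k • x) (Submodule.smul_mem _ k hx))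
    (symMul : ∀ c hc x hx, p x hx → p (symMul c x) (symMul_mem_symSpan hc hx))
    {x : Z} (hx : x ∈ symSpan X I) : p x hx := by
  induction hx using Submodule.span_induction with
  | mem x hx =>
    obtain ⟨l, hl, i, hi, rfl⟩ := hx
    induction l with
    | nil => exact mem i hi
    | cons c l ih =>
      obtain ⟨hc, hl⟩ := List.forall_mem_cons.1 hl
      exact symMul c hc _ (symWord_mem_symSpan hl hi) (ih hl)
  | zero => exact zero
  | add x y hx hy hx' hy' => exact add x y hx hy hx' hy'
  | smul k x hx hx' => exact smul k x hx hx'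

variable [IsZinbiel Z]

theorem symMul_mem_symSpan_of_mem_closure
    (hI : ∀ i ∈ I, ∀ s ∈ commutatorClosure K X, ⁅i, s⁆ ∈ I) {s i : Z}
    (hs : s ∈ commutatorClosure K X) (hi : i ∈ I) : symMul s i ∈ symSpan X I := by
  induction hs using commutatorClosure_induction generalizing i with
  | mem c hc => exact symMul_mem_symSpan hc (le_symSpan hi)
  | zero => simp
  | add u v _ _ hu hv => simpa only [add_symMul] using add_mem (hu hi) (hv hi)
  | smul k u _ hu => simpa only [smul_symMul] using Submodule.smul_mem _ k (hu hi)
  | lie u v hu hv ihu ihv =>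
    rw [symMul_lie]
    refine add_mem (sub_mem (ihu (hI i hi v hv)) (ihv (hI i hi u hu))) (le_symSpan ?_)
    exact sub_mem (sub_mem (hI _ (hI i hi u hu) v hv) (hI i hi _ (lie_mem_commutatorClosure hu hv)))
      (hI _ (hI i hi v hv) u hu)

theorem symMul_mem_symSpan_of_mem_symSpan
    (hI : ∀ i ∈ I, ∀ s ∈ commutatorClosure K X, ⁅i, s⁆ ∈ I) {x y : Z}
    (hx : x ∈ symSpan X (commutatorClosure K X)) (hy : y ∈ symSpan X I) :
    symMul x y ∈ symSpan X I := by
  induction hx using symSpan_induction with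
  | mem s hs =>
    induction hy using symSpan_induction with
    | mem i hi => exact symMul_mem_symSpan_of_mem_closure hI hs hi
    | zero => simp
    | add y z _ _ hy hz => simpa only [symMul_add] using add_mem hy hz
    | smul k y _ hy => simpa only [symMul_smul] using Submodule.smul_mem _ k hy
    | symMul c hc y _ hy =>
      rw [symMul_left_comm]
      exact symMul_mem_symSpan hc hy
  | zero => simp
  | add x z _ _ hx hz => simpa only [add_symMul] using add_mem hx hz
  | smul k x _ hx => simpa only [smul_symMul] using Submodule.smul_mem _ k hx
  | symMul c hc x _ hx =>
    rw [symMul_assoc]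
    exact symMul_mem_symSpan hc hx

variable [Algebra ℚ K]

theorem mul_mem_symSpan_of_mem_closure
    (hI : ∀ i ∈ I, ∀ s ∈ commutatorClosure K X, ⁅i, s⁆ ∈ I) {x s : Z}
    (hx : x ∈ symSpan X I) (hs : s ∈ commutatorClosure K X) : x * s ∈ symSpan X I := by
  induction hs using commutatorClosure_induction generalizing x with
  | mem c hc =>
    exact mul_letter_mem_symSpan (fun i hi c hc => hI i hi c (subset_commutatorClosure hc)) hx hc
  | zero => simp
  | add u v _ _ hu hv => simpa only [mul_add] using add_mem (hu hx) (hv hx)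
  | smul k u _ hu => simpa only [mul_smul_comm] using Submodule.smul_mem _ k (hu hx)
  | lie u v hu hv ihu ihv =>
    have hsym {w : Z} (hw : w ∈ commutatorClosure K X) : symMul x w ∈ symSpan X I := by
      rw [symMul_comm]
      exact symMul_mem_symSpan_of_mem_symSpan hI (le_symSpan hw) hx
    rw [mul_lie_eq]
    exact sub_mem (ihv (hsym hu)) (ihu (hsym hv))

theorem mul_mem_symSpan (hI : ∀ i ∈ I, ∀ s ∈ commutatorClosure K X, ⁅i, s⁆ ∈ I) {x y : Z}
    (hx : x ∈ symSpan X I) (hy : y ∈ symSpan X (commutatorClosure K X)) : x * y ∈ symSpan X I := by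
  induction hy using symSpan_induction generalizing x with
  | mem s hs => exact mul_mem_symSpan_of_mem_closure hI hx hs
  | zero => simp
  | add y z _ _ hy hz => simpa only [mul_add] using add_mem (hy hx) (hz hx)
  | smul k y _ hy => simpa only [mul_smul_comm] using Submodule.smul_mem _ k (hy hx)
  | symMul c hc y hy ih =>
    have hexpand : x * symMul c y = symMul c x * y + symMul y x * c := by
      simp only [symMul, mul_add, add_mul, mul_mul]
      abel
    rw [hexpand]
    exact add_mem (ih (symMul_mem_symSpan hc hx)) (mul_mem_symSpan_of_mem_closure hI
      (symMul_mem_symSpan_of_mem_symSpan hI hy hx) (subset_commutatorClosure hc))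

theorem mul_mem_symSpan_of_right (hI : ∀ i ∈ I, ∀ s ∈ commutatorClosure K X, ⁅i, s⁆ ∈ I) {x y : Z}
    (hx : x ∈ symSpan X (commutatorClosure K X)) (hy : y ∈ symSpan X I) : x * y ∈ symSpan X I := by
  rw [eq_sub_of_add_eq (rfl : x * y + y * x = symMul x y)]
  exact sub_mem (symMul_mem_symSpan_of_mem_symSpan hI hx hy) (mul_mem_symSpan hI hy hx)

end SymSpanIdeal

end IsZinbiel

section Quotient

theorem exists_injective_comp_eq_of_ker_eq {K U T B : Type*} [CommRing K] [AddCommGroup U]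
    [AddCommGroup T] [AddCommGroup B] [Module K U] [Module K T] [Module K B] {f : U →ₗ[K] T}
    {h : U →ₗ[K] B} (hf : Function.Surjective f) (hker : LinearMap.ker f = LinearMap.ker h) :
    ∃ φ : T →ₗ[K] B, Function.Injective φ ∧ ∀ u, φ (f u) = h u := by
  have hinj : Function.Injective ((LinearMap.ker f).liftQ h hker.le) :=
    LinearMap.ker_eq_bot.1 (Submodule.ker_liftQ_eq_bot _ _ _ hker.ge)
  refine ⟨(LinearMap.ker f).liftQ h hker.le ∘ₗ (f.quotKerEquivOfSurjective hf).symm.toLinearMap,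
    hinj.comp (LinearEquiv.injective _), fun u => ?_⟩
  have hu : (f.quotKerEquivOfSurjective hf).symm (f u) = (LinearMap.ker f).mkQ u := by
    rw [LinearEquiv.symm_apply_eq]; rfl
  simp [hu]

theorem exists_quotient_of_mul_mem {K : Type*} {A : Type u} [CommRing K]
    [NonUnitalNonAssocRing A] [Module K A] [SMulCommClass K A A] [IsScalarTower K A A]
    (J : Submodule K A) (hl : ∀ x, ∀ y ∈ J, x * y ∈ J) (hr : ∀ x ∈ J, ∀ y, x * y ∈ J) :
    ∃ (B : Type u) (_ : NonUnitalNonAssocRing B) (_ : Module K B) (_ : SMulCommClass K B B)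
      (_ : IsScalarTower K B B) (q : A →ₙₐ[K] B),
      Function.Surjective q ∧ ∀ x, q x = 0 ↔ x ∈ J := by
  have hle (x : A) : J ≤ J.comap (LinearMap.mulLeft K x) := hl x
  let lmul : A →ₗ[K] A ⧸ J →ₗ[K] A ⧸ J :=
    { toFun x := J.mapQ J (LinearMap.mulLeft K x) (hle x)
      map_add' x y := by ext; simp [add_mul]
      map_smul' k x := by ext; simp [smul_mul_assoc] }
  let qmul : A ⧸ J →ₗ[K] A ⧸ J →ₗ[K] A ⧸ J :=
    J.liftQ lmul fun x hx => by
      ext y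
      simpa [lmul, Submodule.Quotient.mk_eq_zero] using hr x hx y
  let ring : NonUnitalNonAssocRing (A ⧸ J) :=
    { (inferInstance : AddCommGroup (A ⧸ J)) with
      mul x y := qmul x y
      left_distrib x y z := map_add (qmul x) y z
      right_distrib x y z := qmul.map_add₂ x y z
      zero_mul y := qmul.map_zero₂ y
      mul_zero x := map_zero (qmul x) }
  exact ⟨A ⧸ J, ring, inferInstanceAs (Module K (A ⧸ J)),
    ⟨fun k x y => (map_smul (qmul x) k y).symm⟩, ⟨fun k x y => qmul.map_smul₂ k x y⟩,
    { J.mkQ with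
      map_zero' := rfl
      map_mul' := fun _ _ => rfl }, J.mkQ_surjective, fun _ => Submodule.Quotient.mk_eq_zero J⟩

end Quotient

namespace IsZinbiel

theorem exists_quotient_of_lie_mem {K : Type*} {Z : Type u} [CommRing K] [Algebra ℚ K]
    [NonUnitalNonAssocRing Z] [Module K Z] [SMulCommClass K Z Z] [IsScalarTower K Z Z]
    [IsZinbiel Z] {X : Set Z} {I : Submodule K Z}
    (hI : ∀ i ∈ I, ∀ s ∈ commutatorClosure K X, ⁅i, s⁆ ∈ I) :
    ∃ (B : Type u) (_ : NonUnitalNonAssocRing B) (_ : Module K B) (_ : SMulCommClass K B B)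
      (_ : IsScalarTower K B B) (_ : IsZinbiel B) (h : commutatorClosure K X →ₗ[K] B),
      (∀ u v, h ⟨⁅u.1, v.1⁆, lie_mem_commutatorClosure u.2 v.2⟩ = h u * h v - h v * h u) ∧
        ∀ s, h s = 0 ↔ s.1 ∈ symSpan X I := by
  let envelope : NonUnitalSubalgebra K Z :=
    { symSpan X (commutatorClosure K X) with
      mul_mem' := mul_mem_symSpan fun _ hi _ hs => lie_mem_commutatorClosure hi hs }
  have : IsZinbiel envelope := ⟨fun a b c => Subtype.ext (mul_mul a.1 b.1 c.1)⟩
  obtain ⟨B, _, _, _, _, q, hq, hker⟩ := exists_quotient_of_mul_mem (A := envelope)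
    ((symSpan X I).comap envelope.toSubmodule.subtype)
    (fun x _ hy => mul_mem_symSpan_of_right hI x.2 hy) (fun _ hx y => mul_mem_symSpan hI hx y.2)
  let inclusion : commutatorClosure K X →ₗ[K] envelope :=
    Submodule.inclusion (le_symSpan : commutatorClosure K X ≤ symSpan X (commutatorClosure K X))
  refine ⟨B, _, _, inferInstance, inferInstance, .of_surjective q hq,
    (q : envelope →ₗ[K] B) ∘ₗ inclusion, fun u v => ?_, fun s => hker _⟩
  exact (map_sub q (inclusion u * inclusion v) (inclusion v * inclusion u)).trans
    (congrArg₂ _ (map_mul q _ _) (map_mul q _ _))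

end IsZinbiel

/-! ### Shuffle series -/

/-- Formal series in the noncommuting letters `α` over `K`, to be multiplied by the shuffle
product. A series is the function of its coefficients, and a list spells a word from right to
left: the head of the list is the last letter of the word. -/
def ShuffleSeries (α K : Type*) : Type _ := List α → K

namespace ShuffleSeries

section Ring

variable {α K : Type*} [CommRing K]

instance : AddCommGroup (ShuffleSeries α K) := inferInstanceAs (AddCommGroup (List α → K))

instance : Module K (ShuffleSeries α K) := inferInstanceAs (Module K (List α → K))

/-- The coefficient of a word. -/
def coeff (w : List α) : ShuffleSeries α K →ₗ[K] K := LinearMap.proj w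

@[ext] theorem ext {f g : ShuffleSeries α K} (h : ∀ w, coeff w f = coeff w g) : f = g := funext h

/-- Keep the words ending in the letter `x` and delete that letter. -/
def deleteLast (x : α) : ShuffleSeries α K →ₗ[K] ShuffleSeries α K where
  toFun f := fun w => f (x :: w)
  map_add' _ _ := rfl
  map_smul' _ _ := rfl

theorem coeff_cons (x : α) (w : List α) (f : ShuffleSeries α K) :
    coeff (x :: w) f = coeff w (deleteLast x f) := rfl

/-- The coefficient of a word in a shuffle product: its last letter comes from one of the two
factors. -/
def coeffMul : List α → ShuffleSeries α K → ShuffleSeries α K → K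
  | [], f, g => coeff [] f * coeff [] g
  | x :: w, f, g => coeffMul w (deleteLast x f) g + coeffMul w f (deleteLast x g)

instance : Mul (ShuffleSeries α K) := ⟨fun f g w => coeffMul w f g⟩

instance : One (ShuffleSeries α K) := ⟨fun w => if w.isEmpty then 1 else 0⟩

@[simp] theorem coeff_nil_mul (f g : ShuffleSeries α K) :
    coeff [] (f * g) = coeff [] f * coeff [] g := rfl

@[simp] theorem coeff_nil_one : coeff [] (1 : ShuffleSeries α K) = 1 := rfl

theorem deleteLast_mul (x : α) (f g : ShuffleSeries α K) :
    deleteLast x (f * g) = deleteLast x f * g + f * deleteLast x g := rfl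

theorem deleteLast_one (x : α) : deleteLast x (1 : ShuffleSeries α K) = 0 := rfl

protected theorem mul_comm (f g : ShuffleSeries α K) : f * g = g * f := by
  ext w
  induction w generalizing f g with
  | nil => exact mul_comm _ _
  | cons x w ih =>
    rw [coeff_cons, coeff_cons, deleteLast_mul, deleteLast_mul, map_add, map_add, add_comm,
      ih f, ih (deleteLast x f)]

protected theorem mul_add (f g h : ShuffleSeries α K) : f * (g + h) = f * g + f * h := by
  ext w
  induction w generalizing f g h with
  | nil => simp [mul_add]
  | cons x w ih =>
    simp only [map_add] at ih
    simp only [coeff_cons, deleteLast_mul, map_add, ih]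
    abel

protected theorem add_mul (f g h : ShuffleSeries α K) : (f + g) * h = f * h + g * h := by
  simp only [ShuffleSeries.mul_comm _ h, ShuffleSeries.mul_add]

protected theorem mul_assoc (f g h : ShuffleSeries α K) : f * g * h = f * (g * h) := by
  ext w
  induction w generalizing f g h with
  | nil => simp [mul_assoc]
  | cons x w ih =>
    simp only [coeff_cons, deleteLast_mul, map_add, ShuffleSeries.add_mul, ShuffleSeries.mul_add,
      ih, add_assoc]

protected theorem mul_smul (k : K) (f g : ShuffleSeries α K) : f * k • g = k • (f * g) := by
  ext w
  induction w generalizing f g with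
  | nil => simp [mul_left_comm]
  | cons x w ih =>
    simp only [map_smul, smul_eq_mul] at ih
    simp only [coeff_cons, deleteLast_mul, map_add, map_smul, smul_eq_mul, ih, mul_add]

protected theorem mul_zero (f : ShuffleSeries α K) : f * 0 = 0 := by
  simpa using ShuffleSeries.mul_smul 0 f 0

protected theorem mul_one (f : ShuffleSeries α K) : f * 1 = f := by
  ext w
  induction w generalizing f with
  | nil => simp
  | cons x w ih =>
    simp only [coeff_cons, deleteLast_mul, deleteLast_one, ShuffleSeries.mul_zero, add_zero, ih]

instance : CommRing (ShuffleSeries α K) :=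
  { (inferInstance : AddCommGroup (ShuffleSeries α K)) with
    mul_comm := ShuffleSeries.mul_comm
    mul_assoc := ShuffleSeries.mul_assoc
    one_mul f := by rw [ShuffleSeries.mul_comm, ShuffleSeries.mul_one]
    mul_one := ShuffleSeries.mul_one
    left_distrib := ShuffleSeries.mul_add
    right_distrib := ShuffleSeries.add_mul
    zero_mul f := by rw [ShuffleSeries.mul_comm, ShuffleSeries.mul_zero]
    mul_zero := ShuffleSeries.mul_zero }

instance : Algebra K (ShuffleSeries α K) :=
  Algebra.ofModule
    (fun k f g => by rw [mul_comm, ShuffleSeries.mul_smul, mul_comm])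
    (fun k f g => ShuffleSeries.mul_smul k f g)

/-- `deleteLast x` is a derivation of the shuffle algebra. -/
def letterDeriv (x : α) : Derivation K (ShuffleSeries α K) (ShuffleSeries α K) :=
  Derivation.mk' (deleteLast x) fun f g => by
    rw [deleteLast_mul, smul_eq_mul, smul_eq_mul, add_comm, mul_comm g]

theorem coeff_letterDeriv (x : α) (w : List α) (f : ShuffleSeries α K) :
    coeff w (letterDeriv x f) = coeff (x :: w) f := rfl

theorem letterDeriv_mul (x : α) (f g : ShuffleSeries α K) :
    letterDeriv x (f * g) = letterDeriv x f * g + f * letterDeriv x g := rfl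

theorem ext_letterDeriv {f g : ShuffleSeries α K} (hnil : coeff [] f = coeff [] g)
    (h : ∀ x, letterDeriv x f = letterDeriv x g) : f = g := by
  ext w
  cases w with
  | nil => exact hnil
  | cons x w => exact congrArg (coeff w) (h x)

theorem coeff_mul_eq_zero {m n : ℕ} {f g : ShuffleSeries α K}
    (hf : ∀ w : List α, w.length < m → coeff w f = 0)
    (hg : ∀ w : List α, w.length < n → coeff w g = 0) {w : List α} (hw : w.length < m + n) :
    coeff w (f * g) = 0 := by
  induction w generalizing f g m n with
  | nil =>
    rw [coeff_nil_mul]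
    obtain hm | hn : 0 < m ∨ 0 < n := by simpa [Nat.pos_iff_ne_zero, imp_iff_or_not] using hw
    · rw [hf [] hm, zero_mul]
    · rw [hg [] hn, mul_zero]
  | cons x w ih =>
    rw [← coeff_letterDeriv, letterDeriv_mul, map_add]
    rw [List.length_cons] at hw
    have hdelete {n : ℕ} {f : ShuffleSeries α K} (hf : ∀ w : List α, w.length < n → coeff w f = 0)
        (v : List α) (hv : v.length < n - 1) : coeff v (letterDeriv x f) = 0 :=
      hf (x :: v) (by rw [List.length_cons]; omega)
    rw [ih (hdelete hf) hg (by omega), ih hf (hdelete hg) (by omega), add_zero]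

end Ring

section Letters

variable {α K : Type*} [CommRing K] [DecidableEq α]

/-- The word with the single letter `x`. -/
def letter (x : α) : ShuffleSeries α K := fun w => if w = [x] then 1 else 0

@[simp] theorem coeff_nil_letter (x : α) : coeff [] (letter x : ShuffleSeries α K) = 0 := rfl

theorem coeff_singleton_letter (x y : α) :
    coeff [y] (letter x : ShuffleSeries α K) = if y = x then 1 else 0 := by
  change (if [y] = [x] then (1 : K) else 0) = _
  simp

theorem letterDeriv_letter (x y : α) :
    letterDeriv y (letter x : ShuffleSeries α K) = if y = x then 1 else 0 := by
  ext w
  change (if y :: w = [x] then (1 : K) else 0) = _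
  by_cases h : y = x
  · cases w with
    | nil => simp [h]
    | cons z w => simp [h]; rfl
  · simp [h]

@[simp] theorem letterDeriv_letter_self (x : α) :
    letterDeriv x (letter x : ShuffleSeries α K) = 1 := by
  simp [letterDeriv_letter]

variable (α K) in
/-- The ideal of the shuffle algebra generated by the letters. -/
def letterIdeal : Ideal (ShuffleSeries α K) := Ideal.span (Set.range letter)

theorem letter_mem_letterIdeal (x : α) : letter x ∈ letterIdeal α K :=
  Ideal.subset_span ⟨x, rfl⟩

theorem coeff_eq_zero_of_mem_pow_letterIdeal {n : ℕ} {f : ShuffleSeries α K}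
    (hf : f ∈ letterIdeal α K ^ n) {w : List α} (hw : w.length < n) : coeff w f = 0 := by
  have hone {f : ShuffleSeries α K} (hf : f ∈ letterIdeal α K) : coeff [] f = 0 := by
    induction hf using Submodule.span_induction with
    | mem _ hx => obtain ⟨x, rfl⟩ := hx; rfl
    | zero => simp
    | add f g _ _ hf hg => rw [map_add, hf, hg, add_zero]
    | smul r f _ hf => rw [smul_eq_mul, coeff_nil_mul, hf, mul_zero]
  induction n generalizing f w with
  | zero => exact absurd hw (Nat.not_lt_zero _)
  | succ n ih =>
    rw [pow_succ] at hf
    induction hf using Submodule.mul_induction_on' with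
    | mem_mul_mem g hg h hh =>
      refine coeff_mul_eq_zero (n := 1) (fun v hv => ih hg hv) (fun v hv => ?_) hw
      rw [List.length_eq_zero_iff.1 (Nat.lt_one_iff.1 hv), hone hh]
    | add g _ h _ hg hh => rw [map_add, hg, hh, add_zero]

variable [Fintype α]

variable (α K) in
/-- The Euler derivation `∑ x, x ∂ₓ`, whose linear part on the ideal of the letters is the
identity. -/
def eulerDeriv : Derivation K (ShuffleSeries α K) (ShuffleSeries α K) :=
  ∑ x : α, (letter x : ShuffleSeries α K) • letterDeriv x

theorem eulerDeriv_apply (f : ShuffleSeries α K) :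
    eulerDeriv α K f = ∑ x, letter x * letterDeriv x f := by
  simp only [eulerDeriv, ← Derivation.coeFnAddMonoidHom_apply, map_sum, Finset.sum_apply]
  rfl

theorem eulerDeriv_letter (x : α) : eulerDeriv α K (letter x) = letter x := by
  simp [eulerDeriv_apply, letterDeriv_letter]

theorem eulerDeriv_mem_letterIdeal (f : ShuffleSeries α K) :
    eulerDeriv α K f ∈ letterIdeal α K := by
  rw [eulerDeriv_apply]
  exact sum_mem fun x _ => Ideal.mul_mem_right _ _ (letter_mem_letterIdeal x)

theorem eulerDeriv_sub_self_mem {f : ShuffleSeries α K} (hf : f ∈ letterIdeal α K) :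
    eulerDeriv α K f - f ∈ letterIdeal α K ^ 2 :=
  derivation_sub_self_mem_sq_span _ eulerDeriv_mem_letterIdeal
    (by rintro _ ⟨x, rfl⟩; exact eulerDeriv_letter x) hf

theorem eq_zero_of_eulerDeriv_eq_neg_nsmul [Algebra ℚ K] {n₀ m : ℕ} (hm : n₀ + m ≠ 0)
    {f : ShuffleSeries α K} (hf : f ∈ letterIdeal α K ^ n₀) (hDf : eulerDeriv α K f = -(m • f)) :
    f = 0 := by
  have hunit : ∀ n ≥ n₀, IsUnit (-(m : K) - n) := fun n hn => by
    rw [← neg_add', ← Nat.cast_add]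
    exact (isUnit_natCast_of_ratAlgebra K (by omega)).neg
  ext w
  refine coeff_eq_zero_of_mem_pow_letterIdeal (n := n₀ + w.length + 1) ?_ (by omega)
  refine mem_pow_of_derivation_eq_smul eulerDeriv_mem_letterIdeal
    (fun _ => eulerDeriv_sub_self_mem) hf ?_ hunit _ (by omega)
  rw [hDf, neg_smul, Nat.cast_smul_eq_nsmul]

end Letters

section HalfShuffle

variable {α K : Type*} [CommRing K]

/-- The series without constant term whose derivative with respect to each letter `x` is `F x`. -/
def antideriv (F : α → ShuffleSeries α K) : ShuffleSeries α K
  | [] => 0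
  | x :: w => coeff w (F x)

@[simp] theorem coeff_nil_antideriv (F : α → ShuffleSeries α K) : coeff [] (antideriv F) = 0 := rfl

@[simp] theorem letterDeriv_antideriv (F : α → ShuffleSeries α K) (x : α) :
    letterDeriv x (antideriv F) = F x := rfl

/-- The half-shuffle `f ≺ g`, the part of the shuffle product in which the last letter comes from
`g`. -/
def halfShuffle : ShuffleSeries α K →ₗ[K] ShuffleSeries α K →ₗ[K] ShuffleSeries α K :=
  LinearMap.mk₂ K (fun f g => antideriv fun x => f * letterDeriv x g)
    (fun _ _ _ => ext_letterDeriv (by simp) fun _ => by simp [add_mul])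
    (fun _ _ _ => ext_letterDeriv (by simp) fun _ => by simp)
    (fun _ _ _ => ext_letterDeriv (by simp) fun _ => by simp [mul_add])
    (fun _ _ _ => ext_letterDeriv (by simp) fun _ => by simp)

local notation:70 f:70 " ≺ " g:71 => halfShuffle f g

@[simp] theorem coeff_nil_halfShuffle (f g : ShuffleSeries α K) : coeff [] (f ≺ g) = 0 := rfl

@[simp] theorem letterDeriv_halfShuffle (x : α) (f g : ShuffleSeries α K) :
    letterDeriv x (f ≺ g) = f * letterDeriv x g := rfl

theorem halfShuffle_add_halfShuffle {f g : ShuffleSeries α K} (hf : coeff [] f = 0) :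
    f ≺ g + g ≺ f = f * g := by
  refine ext_letterDeriv (by simp [hf]) fun x => ?_
  rw [map_add, letterDeriv_halfShuffle, letterDeriv_halfShuffle, letterDeriv_mul]
  ring

theorem one_halfShuffle {f : ShuffleSeries α K} (hf : coeff [] f = 0) : 1 ≺ f = f :=
  ext_letterDeriv (by simp [hf]) fun x => by simp

theorem halfShuffle_halfShuffle (f g h : ShuffleSeries α K) : f ≺ (g ≺ h) = (f * g) ≺ h :=
  ext_letterDeriv rfl fun x => by simp [mul_assoc]

theorem halfShuffle_halfShuffle_halfShuffle {e : ShuffleSeries α K} (he : coeff [] e = 0)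
    (f g h : ShuffleSeries α K) :
    e ≺ ((f ≺ g) ≺ h) = ((e * f) ≺ g) ≺ h + ((f ≺ g) ≺ e) ≺ h := by
  rw [halfShuffle_halfShuffle, ← halfShuffle_halfShuffle e f g, ← halfShuffle_add_halfShuffle he,
    map_add, LinearMap.add_apply]

variable [DecidableEq α]

theorem letterDeriv_halfShuffle_letter (x y : α) (f : ShuffleSeries α K) :
    letterDeriv y (f ≺ letter x) = if y = x then f else 0 := by
  simp [letterDeriv_letter]

variable [Fintype α] [Algebra ℚ K]

theorem eq_zero_of_smul_one_add_sum_eq_zero {k : K} {f : α → ShuffleSeries α K}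
    (h : k • 1 + ∑ x, (f x ≺ letter x + letter x * f x) = 0) : k = 0 ∧ f = 0 := by
  have hk : k = 0 := by simpa using congrArg (coeff []) h
  set q := ∑ x, letter x * f x with hq
  have hq' : q = -∑ x, f x ≺ letter x := by
    rw [hk, zero_smul, zero_add, Finset.sum_add_distrib] at h
    exact eq_neg_of_add_eq_zero_right h
  have hderiv (x : α) : letterDeriv x q = -f x := by
    simp only [hq', map_neg, map_sum, letterDeriv_halfShuffle_letter, Finset.sum_ite_eq,
      Finset.mem_univ, if_true]
  have hDq : eulerDeriv α K q = -(1 • q) := by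
    simp only [eulerDeriv_apply, hderiv, mul_neg, Finset.sum_neg_distrib, one_smul, ← hq]
  have hq0 : q = 0 := eq_zero_of_eulerDeriv_eq_neg_nsmul (n₀ := 0) one_ne_zero (by simp) hDq
  refine ⟨hk, funext fun x => neg_eq_zero.1 ?_⟩
  rw [← hderiv, hq0, map_zero]

end HalfShuffle

section Skew

variable {K : Type*} [CommRing K]

local notation:70 f:70 " ≺ " g:71 => halfShuffle f g

/-- The skew series `w(ab - ba)` in the letters `a` and `b`. -/
def skew : ShuffleSeries (Fin 2) K →ₗ[K] ShuffleSeries (Fin 2) K :=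
  halfShuffle.flip (letter 1) ∘ₗ halfShuffle.flip (letter 0) -
    halfShuffle.flip (letter 0) ∘ₗ halfShuffle.flip (letter 1)

theorem skew_apply (w : ShuffleSeries (Fin 2) K) :
    skew w = (w ≺ letter 0) ≺ letter 1 - (w ≺ letter 1) ≺ letter 0 := rfl

@[simp] theorem letterDeriv_zero_skew (w : ShuffleSeries (Fin 2) K) :
    letterDeriv 0 (skew w) = -(w ≺ letter 1) := by
  simp [skew_apply, letterDeriv_letter]

@[simp] theorem letterDeriv_one_skew (w : ShuffleSeries (Fin 2) K) :
    letterDeriv 1 (skew w) = w ≺ letter 0 := by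
  simp [skew_apply, letterDeriv_letter]

theorem coeff_singleton_skew (x : Fin 2) (w : ShuffleSeries (Fin 2) K) :
    coeff [x] (skew w) = 0 := by
  simp [← coeff_letterDeriv, skew_apply]

theorem skew_one : (skew 1 : ShuffleSeries (Fin 2) K) =
    letter 0 ≺ letter 1 - letter 1 ≺ letter 0 := by
  rw [skew_apply, one_halfShuffle (coeff_nil_letter 0), one_halfShuffle (coeff_nil_letter 1)]

theorem skew_halfShuffle_letter_sub (w : ShuffleSeries (Fin 2) K) (x : Fin 2) :
    skew w ≺ letter x - letter x ≺ skew w = -skew (w ≺ letter x + letter x * w) := by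
  have h : letter x ≺ skew w = skew (letter x * w) + ((w ≺ letter 0) ≺ letter x) ≺ letter 1 -
      ((w ≺ letter 1) ≺ letter x) ≺ letter 0 := by
    simp only [skew_apply, map_sub, halfShuffle_halfShuffle_halfShuffle (coeff_nil_letter x)]
    abel
  rw [h]
  fin_cases x <;>
    simp only [skew_apply, map_add, map_sub, LinearMap.sub_apply, Fin.zero_eta, Fin.mk_one] <;>
    abel

variable [Algebra ℚ K]

theorem eq_zero_of_skew_mem_letterIdeal {w : ShuffleSeries (Fin 2) K}
    (h : skew w ∈ letterIdeal (Fin 2) K) : w = 0 := by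
  have hD (f : ShuffleSeries (Fin 2) K) : eulerDeriv (Fin 2) K f =
      letter 0 * letterDeriv 0 f + letter 1 * letterDeriv 1 f := by
    rw [eulerDeriv_apply, Fin.sum_univ_two]
  have hDskew : eulerDeriv (Fin 2) K (skew w) =
      letter 1 * (w ≺ letter 0) - letter 0 * (w ≺ letter 1) := by
    rw [hD, letterDeriv_zero_skew, letterDeriv_one_skew]; ring
  have hskew : skew w = letter 1 * (w ≺ letter 0) - letter 0 * (w ≺ letter 1) := by
    rw [← hDskew, ← sub_eq_zero, ← neg_sub, neg_eq_zero]
    refine eq_zero_of_eulerDeriv_eq_neg_nsmul (m := 0) two_ne_zero (eulerDeriv_sub_self_mem h) ?_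
    rw [map_sub, hDskew, hD]
    simp only [map_sub, Derivation.leibniz, letterDeriv_halfShuffle, letterDeriv_letter_self,
      letterDeriv_letter, zero_ne_one, one_ne_zero, if_false, smul_eq_mul, mul_one, mul_zero,
      zero_nsmul, neg_zero]
    ring
  have h0 : -(w ≺ letter 1) = letter 1 * w - w ≺ letter 1 := by
    simpa [letterDeriv_letter] using congrArg (letterDeriv 0) hskew
  have h1 : w ≺ letter 0 = w ≺ letter 0 - letter 0 * w := by
    simpa [letterDeriv_letter] using congrArg (letterDeriv 1) hskew
  have ha : letter 0 * w = 0 := by linear_combination h1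
  have hb : letter 1 * w = 0 := by linear_combination -h0
  refine eq_zero_of_eulerDeriv_eq_neg_nsmul (n₀ := 0) (m := 2) (by simp) (by simp) ?_
  have ha' : letter 0 * letterDeriv 0 w + w = 0 := by
    simpa using congrArg (letterDeriv 0) ha
  have hb' : letter 1 * letterDeriv 1 w + w = 0 := by
    simpa using congrArg (letterDeriv 1) hb
  rw [hD, two_smul]
  linear_combination ha' + hb'

end Skew

end ShuffleSeries

section FoldrIndependence

variable {ι R V : Type*} [Fintype ι] [CommRing R] [AddCommGroup V] [Module R V]
  {ρ : ι → Module.End R V} {v : V}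

theorem linearCombination_foldr_eq (c : List ι →₀ R) :
    Finsupp.linearCombination R (List.foldr (fun x => ρ x) v) c = c [] • v +
      ∑ x, ρ x (Finsupp.linearCombination R (List.foldr (fun x => ρ x) v)
        (c.comapDomain (x :: ·) List.cons_injective.injOn)) := by
  classical
  induction c using Finsupp.induction_linear with
  | zero => simp
  | add c d hc hd =>
    simp only [map_add, hc, hd, Finsupp.add_apply, add_smul, Finset.sum_add_distrib,
      Finsupp.comapDomain_add_of_injective List.cons_injective]
    abel
  | single l k =>
    cases l with
    | nil =>
      have hcomap (x : ι) :
          (Finsupp.single [] k).comapDomain (x :: ·) List.cons_injective.injOn = 0 := by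
        ext w; simp
      simp [hcomap]
    | cons y l =>
      have hcomap (x : ι) :
          (Finsupp.single (y :: l) k).comapDomain (x :: ·) List.cons_injective.injOn =
            if y = x then Finsupp.single l k else 0 := by
        ext w; by_cases h : y = x <;> simp [h, Finsupp.single_apply]
      simp [hcomap, apply_ite]

theorem linearIndependent_foldr
    (h : ∀ (k : R) (f : ι → V), k • v + ∑ x, ρ x (f x) = 0 → k = 0 ∧ f = 0) :
    LinearIndependent R (List.foldr (fun x => ρ x) v) := by
  refine linearIndependent_iff.2 fun c hc => Finsupp.ext fun l => ?_
  induction l generalizing c with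
  | nil => exact (h _ _ ((linearCombination_foldr_eq c).symm.trans hc)).1
  | cons x l ih =>
    have htail := (h _ _ ((linearCombination_foldr_eq c).symm.trans hc)).2
    simpa using ih _ (congrFun htail x)

end FoldrIndependence

/-! ### The Zinbiel algebra of shuffle series -/

open IsZinbiel MinusAlgebra

/-- The Zinbiel algebra of shuffle series without constant term, with the half-shuffle as its
product. -/
def ZinbielSeries (α K : Type*) [CommRing K] : Type _ :=
  LinearMap.ker (ShuffleSeries.coeff [] : ShuffleSeries α K →ₗ[K] K)

namespace ZinbielSeries

open ShuffleSeries

section Ring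

variable {α K : Type*} [CommRing K]

instance : AddCommGroup (ZinbielSeries α K) :=
  inferInstanceAs (AddCommGroup (LinearMap.ker (coeff [] : ShuffleSeries α K →ₗ[K] K)))

instance : Module K (ZinbielSeries α K) :=
  inferInstanceAs (Module K (LinearMap.ker (coeff [] : ShuffleSeries α K →ₗ[K] K)))

/-- The underlying series. -/
def toSeries : ZinbielSeries α K →ₗ[K] ShuffleSeries α K :=
  (LinearMap.ker (coeff [] : ShuffleSeries α K →ₗ[K] K)).subtype

theorem toSeries_injective : Function.Injective (toSeries : ZinbielSeries α K →ₗ[K] _) :=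
  Subtype.val_injective

@[simp] theorem coeff_nil_toSeries (f : ZinbielSeries α K) : coeff [] (toSeries f) = 0 := f.2

instance : Mul (ZinbielSeries α K) :=
  ⟨fun f g => ⟨halfShuffle (toSeries f) (toSeries g), coeff_nil_halfShuffle _ _⟩⟩

@[simp] theorem toSeries_mul (f g : ZinbielSeries α K) :
    toSeries (f * g) = halfShuffle (toSeries f) (toSeries g) := rfl

instance : NonUnitalNonAssocRing (ZinbielSeries α K) where
  left_distrib f g h := toSeries_injective (by simp)
  right_distrib f g h := toSeries_injective (by simp)
  zero_mul f := toSeries_injective (by simp)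
  mul_zero f := toSeries_injective (by simp)

instance : SMulCommClass K (ZinbielSeries α K) (ZinbielSeries α K) where
  smul_comm k f g := toSeries_injective (by simp)

instance : IsScalarTower K (ZinbielSeries α K) (ZinbielSeries α K) where
  smul_assoc k f g := toSeries_injective (by simp)

theorem toSeries_symMul (f g : ZinbielSeries α K) :
    toSeries (symMul f g) = toSeries f * toSeries g :=
  halfShuffle_add_halfShuffle (coeff_nil_toSeries f)

instance : IsZinbiel (ZinbielSeries α K) where
  mul_mul f g h := toSeries_injective <| by
    change _ = toSeries (symMul f g * h)
    rw [toSeries_mul, toSeries_mul, toSeries_mul, toSeries_symMul, halfShuffle_halfShuffle]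

/-- The letter `x` as an element of the Zinbiel algebra. -/
def gen [DecidableEq α] (x : α) : ZinbielSeries α K := ⟨letter x, coeff_nil_letter x⟩

@[simp] theorem toSeries_gen [DecidableEq α] (x : α) :
    toSeries (gen x : ZinbielSeries α K) = letter x := rfl

end Ring

section Words

variable {K : Type*} [CommRing K]

variable (K) in
/-- The operator `f ↦ -(f ≺ x + x * f)`. Bracketing with the letter `x` acts by it on the argument
of `skew`. -/
def bracketOp (x : Fin 2) : Module.End K (ShuffleSeries (Fin 2) K) :=
  -(halfShuffle.flip (letter x) + LinearMap.mulLeft K (letter x))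

theorem toSeries_leftNormedWord (l : List (Fin 2)) :
    toSeries ((toMinus K).symm (leftNormedWord (fun i => toMinus K (gen i)) l)) =
      skew (l.foldr (fun x => bracketOp K x) 1) := by
  induction l with
  | nil => exact skew_one.symm
  | cons x l ih =>
    rw [List.foldr_cons]
    set w := l.foldr (fun x => bracketOp K x) 1
    rw [bracketOp, LinearMap.neg_apply, map_neg]
    refine Eq.trans ?_ (skew_halfShuffle_letter_sub w x)
    rw [← ih]
    rfl

variable [Algebra ℚ K]

theorem linearIndependent_foldr_bracketOp :
    LinearIndependent K (List.foldr (fun x => bracketOp K x) 1) :=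
  linearIndependent_foldr fun k f h => by
    have hneg : k • 1 + ∑ x, (halfShuffle ((-f) x) (letter x) + letter x * (-f) x) = 0 := by
      simpa [bracketOp, add_comm] using h
    exact (eq_zero_of_smul_one_add_sum_eq_zero hneg).imp_right neg_eq_zero.1

end Words

end ZinbielSeries

/-! ### Two-generated Tortkara algebras -/

namespace ZinbielSeries

open ShuffleSeries

section Decomposables

variable {α K : Type*} [CommRing K] [DecidableEq α]

variable (α K) in
/-- The series without linear part in the ideal of the shuffle algebra generated by the letters. -/
def decomposables : Submodule K (ZinbielSeries α K) :=
  ((letterIdeal α K).restrictScalars K ⊓ ⨅ x, LinearMap.ker (coeff [x])).comap toSeries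

theorem mem_decomposables {f : ZinbielSeries α K} : f ∈ decomposables α K ↔
    toSeries f ∈ letterIdeal α K ∧ ∀ x, coeff [x] (toSeries f) = 0 := by
  simp [decomposables]

theorem symMul_gen_mem_decomposables (x : α) (f : ZinbielSeries α K) :
    symMul (gen x) f ∈ decomposables α K := by
  rw [mem_decomposables, toSeries_symMul, toSeries_gen]
  refine ⟨Ideal.mul_mem_right _ _ (letter_mem_letterIdeal x), fun y => ?_⟩
  simp [← coeff_letterDeriv]

theorem symSpan_range_gen_le (I : Submodule K (ZinbielSeries α K)) :
    symSpan (Set.range gen) I ≤ I ⊔ decomposables α K := by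
  refine Submodule.span_le.2 ?_
  rintro _ ⟨l, hl, i, hi, rfl⟩
  cases l with
  | nil => exact Submodule.mem_sup_left hi
  | cons c l =>
    obtain ⟨x, rfl⟩ := hl c List.mem_cons_self
    exact Submodule.mem_sup_right (symMul_gen_mem_decomposables x _)

end Decomposables

end ZinbielSeries

open ZinbielSeries ShuffleSeries

section Graph

variable {K T : Type*} [CommRing K] [NonUnitalNonAssocRing T] {t : Fin 2 → T}

variable (K) in
/-- The pairs formed by a letter and the corresponding element of `T`. -/
def letterPair (t : Fin 2 → T) (i : Fin 2) : MinusAlgebra (ZinbielSeries (Fin 2) K) × T :=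
  (toMinus K (gen i), t i)

theorem fst_leftNormedWord_letterPair (l : List (Fin 2)) :
    (leftNormedWord (letterPair K t) l).1 = leftNormedWord (fun i => toMinus K (gen i)) l := by
  induction l with
  | nil => rfl
  | cons i l ih => exact congrArg (· * toMinus K (gen i)) ih

variable [Module K T]

theorem toSeries_fst_linearCombination (c : List (Fin 2) →₀ K) :
    toSeries
        ((toMinus K).symm (Finsupp.linearCombination K (leftNormedWord (letterPair K t)) c).1) =
      skew (Finsupp.linearCombination K (List.foldr (fun x => bracketOp K x) 1) c) := by
  simp only [Finsupp.linearCombination_apply, Finsupp.sum, Prod.fst_sum, Prod.smul_fst,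
    map_sum, map_smul, fst_leftNormedWord_letterPair, toSeries_leftNormedWord]

theorem coeff_singleton_of_mem_leftNormedSpan {u : MinusAlgebra (ZinbielSeries (Fin 2) K) × T}
    (hu : u ∈ leftNormedSpan K (letterPair K t)) (x : Fin 2) :
    coeff [x] (toSeries ((toMinus K).symm u.1)) = 0 := by
  rw [leftNormedSpan, ← Finsupp.range_linearCombination] at hu
  obtain ⟨c, rfl⟩ := hu
  rw [toSeries_fst_linearCombination, coeff_singleton_skew]

theorem eq_zero_of_mem_leftNormedSpan [Algebra ℚ K]
    {u : MinusAlgebra (ZinbielSeries (Fin 2) K) × T} (hu : u ∈ leftNormedSpan K (letterPair K t))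
    (h : toSeries ((toMinus K).symm u.1) ∈ letterIdeal (Fin 2) K) : u = 0 := by
  rw [leftNormedSpan, ← Finsupp.range_linearCombination] at hu
  obtain ⟨c, rfl⟩ := hu
  rw [toSeries_fst_linearCombination] at h
  have hzero := eq_zero_of_skew_mem_letterIdeal h
  rw [linearIndependent_iff.1 linearIndependent_foldr_bracketOp c hzero, map_zero]

variable [SMulCommClass K T T] [IsScalarTower K T T]

variable (K) in
/-- The relation between series and elements of `T` generated by the pairs of generators. -/
def letterGraph (t : Fin 2 → T) :
    NonUnitalSubalgebra K (MinusAlgebra (ZinbielSeries (Fin 2) K) × T) :=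
  NonUnitalAlgebra.adjoin K (Set.range (letterPair K t))

variable (K) in
/-- The series related to `0` by `letterGraph`. -/
def relationSpace (t : Fin 2 → T) : Submodule K (ZinbielSeries (Fin 2) K) :=
  (letterGraph K t).toSubmodule.comap (LinearMap.inl K _ T ∘ₗ (toMinus K).toLinearMap)

theorem mem_relationSpace {f : ZinbielSeries (Fin 2) K} :
    f ∈ relationSpace K t ↔ (toMinus K f, 0) ∈ letterGraph K t := Iff.rfl

theorem map_fst_letterGraph : (letterGraph K t).map
    (NonUnitalAlgHom.fst K (MinusAlgebra (ZinbielSeries (Fin 2) K)) T) =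
      NonUnitalAlgebra.adjoin K (toMinus K '' Set.range gen) := by
  rw [letterGraph, NonUnitalAlgHom.map_adjoin, ← Set.range_comp, ← Set.range_comp]
  rfl

theorem map_snd_letterGraph : (letterGraph K t).map
    (NonUnitalAlgHom.snd K (MinusAlgebra (ZinbielSeries (Fin 2) K)) T) =
      NonUnitalAlgebra.adjoin K (Set.range t) := by
  rw [letterGraph, NonUnitalAlgHom.map_adjoin, ← Set.range_comp]
  rfl

theorem mem_commutatorClosure_range_gen {f : ZinbielSeries (Fin 2) K} :
    f ∈ commutatorClosure K (Set.range gen) ↔ ∃ s, (toMinus K f, s) ∈ letterGraph K t := by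
  rw [mem_commutatorClosure, ← map_fst_letterGraph (t := t), NonUnitalSubalgebra.mem_map]
  constructor
  · rintro ⟨⟨z, s⟩, hp, rfl⟩; exact ⟨s, hp⟩
  · rintro ⟨s, hs⟩; exact ⟨_, hs, rfl⟩

theorem lie_mem_relationSpace {f g : ZinbielSeries (Fin 2) K} (hf : f ∈ relationSpace K t)
    (hg : g ∈ commutatorClosure K (Set.range gen)) : ⁅f, g⁆ ∈ relationSpace K t := by
  obtain ⟨s, hs⟩ := (mem_commutatorClosure_range_gen (t := t)).1 hg
  rw [mem_relationSpace] at hf ⊢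
  simpa [toMinus_mul_toMinus] using mul_mem hf hs

variable [Algebra ℚ K] [IsTortkara T]

theorem eq_zero_of_mem_letterGraph {p : MinusAlgebra (ZinbielSeries (Fin 2) K) × T}
    (hp : p ∈ letterGraph K t) (h : (toMinus K).symm p.1 ∈ decomposables (Fin 2) K) : p = 0 := by
  have : Module ℚ (MinusAlgebra (ZinbielSeries (Fin 2) K) × T) := .compHom _ (algebraMap ℚ K)
  have : IsAddTorsionFree (MinusAlgebra (ZinbielSeries (Fin 2) K) × T) := .of_module_rat _
  obtain ⟨v, hv, u, hu, rfl⟩ :=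
    Submodule.mem_sup.1 (IsTortkara.mem_span_sup_leftNormedSpan_of_mem_adjoin hp)
  obtain ⟨k, rfl⟩ := Submodule.mem_span_range_iff_exists_fun K |>.1 hv
  obtain ⟨hideal, hlinear⟩ := mem_decomposables.1 h
  have hk (x : Fin 2) : k x = 0 := by
    simpa [-Fin.sum_univ_two, Prod.fst_sum, letterPair, coeff_singleton_letter,
      coeff_singleton_of_mem_leftNormedSpan hu x] using hlinear x
  simp only [hk, zero_smul, Finset.sum_const_zero, zero_add] at hideal ⊢
  exact eq_zero_of_mem_leftNormedSpan hu hideal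

theorem mem_symSpan_relationSpace_iff {f : ZinbielSeries (Fin 2) K} {s : T}
    (h : (toMinus K f, s) ∈ letterGraph K t) :
    f ∈ symSpan (Set.range gen) (relationSpace K t) ↔ s = 0 := by
  refine ⟨fun hf => ?_, fun hs => le_symSpan (by rwa [mem_relationSpace, ← hs])⟩
  obtain ⟨i, hi, d, hd, rfl⟩ := Submodule.mem_sup.1 (symSpan_range_gen_le _ hf)
  have hd' : (toMinus K d, s) ∈ letterGraph K t := by
    simpa using sub_mem h (mem_relationSpace.1 hi)
  exact congrArg Prod.snd (eq_zero_of_mem_letterGraph hd' hd)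

end Graph

theorem tortkara_two_generated_special_general {K : Type u} {T : Type v} [CommRing K] [Algebra ℚ K]
    [NonUnitalNonAssocRing T] [Module K T] [SMulCommClass K T T] [IsScalarTower K T T]
    [IsTortkara T] {t : Fin 2 → T} (hgen : NonUnitalAlgebra.adjoin K (Set.range t) = ⊤) :
    ∃ (A : Type u) (_ : NonUnitalNonAssocRing A) (_ : Module K A) (_ : SMulCommClass K A A)
      (_ : IsScalarTower K A A) (_ : IsZinbiel A) (φ : T →ₗ[K] A),
      Function.Injective φ ∧ ∀ s s', φ (s * s') = φ s * φ s' - φ s' * φ s := by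
  obtain ⟨B, _, _, _, _, _, h, hlie, hker⟩ := exists_quotient_of_lie_mem
    (I := relationSpace K t) fun _ hf _ hg => lie_mem_relationSpace hf hg
  let series : letterGraph K t →ₗ[K] commutatorClosure K (Set.range gen) :=
    (((toMinus K).symm.toLinearMap ∘ₗ LinearMap.fst K _ T) ∘ₗ
      (letterGraph K t).toSubmodule.subtype).codRestrict _
      fun p => (mem_commutatorClosure_range_gen (t := t)).2 ⟨p.1.2, p.2⟩
  let value : letterGraph K t →ₗ[K] T :=
    LinearMap.snd K _ T ∘ₗ (letterGraph K t).toSubmodule.subtype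
  have hvalue : Function.Surjective value := fun s => by
    obtain ⟨p, hp, rfl⟩ : s ∈ (letterGraph K t).map (NonUnitalAlgHom.snd K _ T) := by
      rw [map_snd_letterGraph, hgen]; trivial
    exact ⟨⟨p, hp⟩, rfl⟩
  have hkernel : LinearMap.ker value = LinearMap.ker (h ∘ₗ series) := by
    ext p
    exact (mem_symSpan_relationSpace_iff p.2).symm.trans (hker (series p)).symm
  obtain ⟨φ, hφ, hφvalue⟩ := exists_injective_comp_eq_of_ker_eq hvalue hkernel
  refine ⟨B, _, _, inferInstance, inferInstance, inferInstance, φ, hφ, fun s s' => ?_⟩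
  obtain ⟨p, rfl⟩ := hvalue s
  obtain ⟨p', rfl⟩ := hvalue s'
  rw [hφvalue, hφvalue]
  exact (hφvalue (p * p')).trans (hlie (series p) (series p'))

/-- Shirshov's theorem analogue: every Tortkara algebra over a field of characteristic 0
generated by two elements is special, i.e. it embeds into the minus-algebra `A⁽⁻⁾` of
some Zinbiel algebra `A`. -/
theorem tortkara_two_generated_special (K : Type) [Field K] [CharZero K]
    (T : Type) [NonUnitalNonAssocRing T] [Module K T]
    [SMulCommClass K T T] [IsScalarTower K T T]
    (hanti : ∀ a b : T, a * b = -(b * a))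
    (htort : ∀ a b c : T,
      (a * b) * (c * b) = ((a * b) * c + (b * c) * a + (c * a) * b) * b)
    (a b : T) (hgen : NonUnitalAlgebra.adjoin K ({a, b} : Set T) = ⊤) :
    ∃ (A : ZinbielAlgebra K) (φ : T →ₗ[K] A.carrier),
      Function.Injective φ ∧ ∀ s t : T, φ (s * t) = φ s * φ t - φ t * φ s := by
  have : IsTortkara T := ⟨hanti, htort⟩
  rw [← Matrix.range_cons_cons_empty a b ![]] at hgen
  obtain ⟨A, _, _, _, _, _, hφ⟩ := tortkara_two_generated_special_general hgen
  exact ⟨⟨A, IsZinbiel.mul_mul⟩, hφ⟩
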